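/- arXiv:cs/0701031 — 5 statements merged into one kernel-verified Lean document; each statement's English description precedes it below -/
import Mathlib

section
/- Let E be a congruence on the ground terms of L and let g be a family of construction functions that is valid with respect to E. Then the normalization function norm associated to g is a valid normalization function for E, i.e., E (norm t) t for every ground term t, and norm t = norm u whenever E t u. -/
open FirstOrder FirstOrder.Language

variable {L : Language}

/-- The normalization function associated to a family of construction functions `g`. -/
def normF (g : ∀ (n : ℕ), L.Functions n → (Fin n → L.Term Empty) → L.Term Empty) :
    L.Term Empty → L.Term Empty
  | .var x => x.elim
  | .func f ts => g _ f (fun i => normF g (ts i))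

/-- The set of values of a family of construction functions `g`. -/
inductive IsValue (g : ∀ (n : ℕ), L.Functions n → (Fin n → L.Term Empty) → L.Term Empty) :
    L.Term Empty → Prop
  | mk {n : ℕ} (f : L.Functions n) (vs : Fin n → L.Term Empty) :
      (∀ i, IsValue g (vs i)) → IsValue g (g n f vs)

/-- A family of construction functions `g` is valid with respect to `E`. -/
def ValidFamily (E : L.Term Empty → L.Term Empty → Prop)
    (g : ∀ (n : ℕ), L.Functions n → (Fin n → L.Term Empty) → L.Term Empty) : Prop :=
  (∀ (n : ℕ) (f : L.Functions n) (vs : Fin n → L.Term Empty),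
      (∀ i, IsValue g (vs i)) → E (g n f vs) (Term.func f vs)) ∧
  (∀ (n p : ℕ) (f : L.Functions n) (f' : L.Functions p)
      (vs : Fin n → L.Term Empty) (ws : Fin p → L.Term Empty),
      (∀ i, IsValue g (vs i)) → (∀ i, IsValue g (ws i)) →
      E (Term.func f vs) (Term.func f' ws) → g n f vs = g p f' ws)

/-- Compatibility of a relation on ground terms with the function symbols. A congruence in the sense
of universal algebra is an equivalence relation with this property. -/
def RespectsFunctions (E : L.Term Empty → L.Term Empty → Prop) : Prop :=
  ∀ (n : ℕ) (f : L.Functions n) (ts us : Fin n → L.Term Empty),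
    (∀ i, E (ts i) (us i)) → E (Term.func f ts) (Term.func f us)

section Normalization

variable {E : L.Term Empty → L.Term Empty → Prop}
  {g : ∀ (n : ℕ), L.Functions n → (Fin n → L.Term Empty) → L.Term Empty}

theorem isValue_normF : ∀ t, IsValue g (normF g t)
  | .func f ts => .mk f _ fun i => isValue_normF (ts i)

theorem rel_normF_self [IsTrans (L.Term Empty) E] (hfun : RespectsFunctions E)
    (hcorrect : ∀ (n : ℕ) (f : L.Functions n) (vs : Fin n → L.Term Empty),
      (∀ i, IsValue g (vs i)) → E (g n f vs) (Term.func f vs)) :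
    ∀ t, E (normF g t) t
  | .func f ts => calc
      E (normF g (.func f ts)) (.func f fun i => normF g (ts i)) :=
        hcorrect _ f _ fun i => isValue_normF (ts i)
      E _ (.func f ts) := hfun _ f _ _ fun i => rel_normF_self hfun hcorrect (ts i)

theorem normF_eq_of_rel (hE : Equivalence E) (hfun : RespectsFunctions E) (hg : ValidFamily E g) :
    ∀ t u, E t u → normF g t = normF g u
  | .func f ts, .func f' us, htu => by
    have : IsTrans (L.Term Empty) E := ⟨fun _ _ _ => hE.trans⟩
    obtain ⟨hcorrect, hcomplete⟩ := hg
    have hself : ∀ t, E (normF g t) t := rel_normF_self hfun hcorrect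
    have hnormalized_args :
        E (.func f fun i => normF g (ts i)) (.func f' fun i => normF g (us i)) := calc
      E (.func f fun i => normF g (ts i)) (.func f ts) := hfun _ f _ _ fun i => hself (ts i)
      E _ (.func f' us) := htu
      E _ (.func f' fun i => normF g (us i)) :=
        hfun _ f' _ _ fun i => hE.symm (hself (us i))
    exact hcomplete _ _ f f' _ _ (fun i => isValue_normF (ts i)) (fun i => isValue_normF (us i))
      hnormalized_args

end Normalization

theorem norm_of_valid_family_is_valid
    (E : L.Term Empty → L.Term Empty → Prop) (hE : Equivalence E)
    (hcong : ∀ (n : ℕ) (f : L.Functions n) (ts us : Fin n → L.Term Empty),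
        (∀ i, E (ts i) (us i)) → E (Term.func f ts) (Term.func f us))
    (g : ∀ (n : ℕ), L.Functions n → (Fin n → L.Term Empty) → L.Term Empty)
    (hg : ValidFamily E g) :
    (∀ t, E (normF g t) t) ∧ (∀ t u, E t u → normF g t = normF g u) := by
  have : IsTrans (L.Term Empty) E := ⟨fun _ _ _ => hE.trans⟩
  exact ⟨rel_normF_self hcong hg.1, normF_eq_of_rel hE hcong hg⟩
end

section
/- Let r be a terminating and confluent binary relation on a type α. Then there exists a valid normalization function for the equivalence closure of r, i.e., a function h : α → α such that EqvGen r (h t) t for all t, and EqvGen r t u implies h t = h u. -/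
/-!
By confluence, elements of one equivalence class have a common reduct (the Church–Rosser property).
Since a normal form is its own only reduct, each class contains at most one normal form, so sending
every element to a normal form it reduces to gives a complete invariant of the classes.
-/

open Relation

section NormalForm

variable {α : Type*} {r : α → α → Prop}

/-- A normal form of the rewriting relation `r`: an element from which no `r`-step is possible. -/
def IsNormalForm (r : α → α → Prop) (n : α) : Prop :=
  ∀ m, ¬ r n m

theorem IsNormalForm.eq_of_reflTransGen {n d : α} (hn : IsNormalForm r n)
    (hnd : ReflTransGen r n d) : n = d :=
  hnd.cases_head.resolve_right fun ⟨m, hnm, _⟩ => hn m hnm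

theorem IsNormalForm.eq_of_join {m n : α} (hm : IsNormalForm r m) (hn : IsNormalForm r n)
    (hmn : Join (ReflTransGen r) m n) : m = n := by
  obtain ⟨d, hmd, hnd⟩ := hmn
  exact (hm.eq_of_reflTransGen hmd).trans (hn.eq_of_reflTransGen hnd).symm

theorem exists_reflTransGen_isNormalForm (hterm : WellFounded (fun a b => r b a)) (t : α) :
    ∃ n, ReflTransGen r t n ∧ IsNormalForm r n := by
  obtain ⟨n, htn, hmin⟩ := hterm.has_min {n | ReflTransGen r t n} ⟨t, .refl⟩
  exact ⟨n, htn, fun m hnm => hmin m (htn.tail hnm) hnm⟩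

theorem join_reflTransGen_of_eqvGen
    (hconf : ∀ a b c, ReflTransGen r a b → ReflTransGen r a c → Join (ReflTransGen r) b c)
    {t u : α} (htu : EqvGen r t u) : Join (ReflTransGen r) t u :=
  have hstep : r ≤ Join (ReflTransGen r) := fun _ b hab => ⟨b, .single hab, .refl⟩
  (equivalence_join hconf).eqvGen_iff.mp (EqvGen.mono hstep _ _ htu)

theorem exists_valid_norm_of_terminating_confluent_general
    (hnorm : ∀ t, ∃ n, ReflTransGen r t n ∧ IsNormalForm r n)
    (hconf : ∀ a b c, ReflTransGen r a b → ReflTransGen r a c → Join (ReflTransGen r) b c) :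
    ∃ h : α → α, (∀ t, ReflTransGen r t (h t) ∧ IsNormalForm r (h t)) ∧
      ∀ t u, EqvGen r t u ↔ h t = h u := by
  choose h hred hnf using hnorm
  have heqv (t : α) : EqvGen r t (h t) := EqvGen.reflTransGen_le_eqvGen r _ _ (hred t)
  refine ⟨h, fun t => ⟨hred t, hnf t⟩, fun t u => ⟨fun htu => ?_, fun hhtu => ?_⟩⟩
  · have hhtu : EqvGen r (h t) (h u) := calc
      EqvGen r (h t) t := symm (heqv t)
      EqvGen r _ u := htu
      EqvGen r _ (h u) := heqv u
    exact (hnf t).eq_of_join (hnf u) (join_reflTransGen_of_eqvGen hconf hhtu)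
  · calc
      EqvGen r t (h t) := heqv t
      _ = h u := hhtu
      EqvGen r _ u := symm (heqv u)

end NormalForm

theorem exists_valid_norm_of_terminating_confluent {α : Type*} (r : α → α → Prop)
    (hterm : WellFounded (fun a b => r b a))
    (hconf : ∀ a b c, Relation.ReflTransGen r a b → Relation.ReflTransGen r a c →
        ∃ d, Relation.ReflTransGen r b d ∧ Relation.ReflTransGen r c d) :
    ∃ h : α → α, (∀ t, Relation.EqvGen r (h t) t) ∧ (∀ t u, Relation.EqvGen r t u → h t = h u) := by
  obtain ⟨h, hnf, heqv⟩ := exists_valid_norm_of_terminating_confluent_general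
    (exists_reflTransGen_isNormalForm hterm) hconf
  exact ⟨h, fun t => symm (EqvGen.reflTransGen_le_eqvGen r _ _ (hnf t).1),
    fun t u => (heqv t u).mp⟩
end

section
/- Let r be a confluent binary relation on α, and let a, b, a', b' : α be such that r* a a', r* b b', and a' and b' are r-normal. Then EqvGen r a b holds if and only if a' = b'. -/
/-!
Confluence of `r` says that two elements with a common `r*`-ancestor have a common `r*`-descendant,
which is exactly what makes having a common descendant transitive. It is then an equivalence
relation, hence equal to `EqvGen r` (the Church–Rosser property). A normal element is its own only
descendant, so two normal elements have a common descendant only if they are equal.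
-/

open Relation

section

variable {α : Type*} {r : α → α → Prop} {a b : α}

theorem join_le_eqvGen : Join r ≤ EqvGen r :=
  join_le_of_equivalence_of_le (EqvGen.is_equivalence r) EqvGen.rel

theorem eqvGen_eq_join [IsPreorder α r] (h : ∀ a b c, r a b → r a c → Join r b c) :
    EqvGen r = Join r := by
  have : IsEquiv α (Join r) := (equivalence_join h).isEquiv
  exact le_antisymm (EqvGen.eqvGen_le le_join_of_refl) join_le_eqvGen

theorem eqvGen_eq_join_reflTransGen
    (h : ∀ a b c, ReflTransGen r a b → ReflTransGen r a c → Join (ReflTransGen r) b c) :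
    EqvGen r = Join (ReflTransGen r) := by
  rw [← EqvGen.eqvGen_reflTransGen, eqvGen_eq_join h]

theorem join_reflTransGen_iff_eq (ha : ∀ c, ¬r a c) (hb : ∀ c, ¬r b c) :
    Join (ReflTransGen r) a b ↔ a = b := by
  simp [Join, reflTransGen_iff_eq ha, reflTransGen_iff_eq hb]

end

theorem eqvGen_iff_normal_forms_eq {α : Type*} (r : α → α → Prop)
    (hconf : ∀ a b c, Relation.ReflTransGen r a b → Relation.ReflTransGen r a c →
        ∃ d, Relation.ReflTransGen r b d ∧ Relation.ReflTransGen r c d)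
    (a b a' b' : α)
    (ha : Relation.ReflTransGen r a a') (hb : Relation.ReflTransGen r b b')
    (ha' : ¬∃ c, r a' c) (hb' : ¬∃ c, r b' c) :
    Relation.EqvGen r a b ↔ a' = b' := by
  have eqv_a : EqvGen r a a' := EqvGen.reflTransGen_le_eqvGen r a a' ha
  have eqv_b : EqvGen r b b' := EqvGen.reflTransGen_le_eqvGen r b b' hb
  calc
    EqvGen r a b ↔ EqvGen r a' b' := rel_congr eqv_a eqv_b
    _ ↔ Join (ReflTransGen r) a' b' := by rw [eqvGen_eq_join_reflTransGen hconf]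
    _ ↔ a' = b' := join_reflTransGen_iff_eq (not_exists.mp ha') (not_exists.mp hb')
end

section
/- Let α be a linearly ordered type. For every t : FreeMagma α there exists a nonempty list that is sorted in nondecreasing order with respect to ≤, whose multiset of elements equals leaves t, and whose right comb is acCon-equivalent to t: there exist a : α and l : List α with (a :: l) sorted nondecreasing, Multiset.ofList (a :: l) = leaves t, and acCon t (rightComb a l). -/
variable {α : Type*}

/-- The AC-congruence on the free magma: the smallest equivalence relation compatible
with multiplication containing commutativity and associativity pairs. -/
inductive acCon : FreeMagma α → FreeMagma α → Prop
  | comm (x y : FreeMagma α) : acCon (x * y) (y * x)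
  | assoc (x y z : FreeMagma α) : acCon (x * y * z) (x * (y * z))
  | refl (t : FreeMagma α) : acCon t t
  | symm {t u : FreeMagma α} : acCon t u → acCon u t
  | trans {t u v : FreeMagma α} : acCon t u → acCon u v → acCon t v
  | mul {t t' u u' : FreeMagma α} : acCon t t' → acCon u u' → acCon (t * u) (t' * u')

/-- The multiset of leaves of a term of the free magma. -/
def leaves : FreeMagma α → Multiset α
  | FreeMagma.of a => {a}
  | FreeMagma.mul t u => leaves t + leaves u

/-- The right comb associated to a nonempty list. -/
def rightComb : α → List α → FreeMagma α
  | a, [] => FreeMagma.of a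
  | a, b :: l => FreeMagma.of a * rightComb b l

/-!
The quotient of the free magma by the AC-congruence is a commutative semigroup. After adjoining a
unit, the class of a term is the product of the classes of its leaves over a multiset, so it depends
only on the multiset of leaves. Hence a term is equivalent to the right comb of any enumeration of
its leaves, in particular of a sorted one.
-/

theorem leaves_mul (t u : FreeMagma α) : leaves (t * u) = leaves t + leaves u := rfl

theorem leaves_ne_zero (t : FreeMagma α) : leaves t ≠ 0 := by
  induction t with
  | ih1 a => exact Multiset.singleton_ne_zero a
  | ih2 t u iht _ => exact fun h ↦ iht (add_eq_zero.1 h).1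

theorem leaves_rightComb (a : α) (l : List α) : leaves (rightComb a l) = ↑(a :: l) := by
  induction l generalizing a with
  | nil => rfl
  | cons b l ih => rw [rightComb, leaves_mul, ih, leaves, Multiset.singleton_add, Multiset.cons_coe]

theorem map_eq_prod_leaves {M : Type*} [CommMonoid M] (f : FreeMagma α →ₙ* M) (t : FreeMagma α) :
    f t = ((leaves t).map fun a ↦ f (FreeMagma.of a)).prod := by
  induction t with
  | ih1 a => exact (Multiset.prod_singleton _).symm
  | ih2 t u iht ihu => rw [map_mul, iht, ihu, leaves_mul, Multiset.map_add, Multiset.prod_add]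

namespace acCon

/-- The AC-congruence as a bundled `Con`, giving access to Mathlib's quotient by a congruence. -/
def toCon (α : Type*) : Con (FreeMagma α) where
  r := acCon
  iseqv := ⟨refl, symm, trans⟩
  mul' := mul

instance : CommSemigroup (toCon α).Quotient where
  mul_assoc x y z := Con.induction_on x fun t ↦ Con.induction_on₂ y z fun u v ↦
    (Con.eq _).2 (assoc t u v)
  mul_comm x y := Con.induction_on₂ x y fun t u ↦ (Con.eq _).2 (comm t u)

/-- The class of a term in the quotient by the AC-congruence. A unit is adjoined to the quotient so
that products over multisets make sense in it. -/
def toWithOneQuotient : FreeMagma α →ₙ* WithOne (toCon α).Quotient :=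
  WithOne.coeMulHom.comp (toCon α).mkMulHom

theorem toWithOneQuotient_eq_iff {t u : FreeMagma α} :
    toWithOneQuotient t = toWithOneQuotient u ↔ acCon t u :=
  WithOne.coe_inj.trans (Con.eq (toCon α))

theorem of_leaves_eq {t u : FreeMagma α} (h : leaves t = leaves u) : acCon t u := by
  rw [← toWithOneQuotient_eq_iff, map_eq_prod_leaves, map_eq_prod_leaves _ u, h]

end acCon

theorem exists_coe_eq_and_pairwise (r : α → α → Prop) [Std.Total r] [IsTrans α r]
    (s : Multiset α) : ∃ l : List α, (l : Multiset α) = s ∧ l.Pairwise r := by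
  classical
  induction s using Quotient.inductionOn with
  | h l => exact ⟨l.insertionSort r, Multiset.coe_eq_coe.2 (l.perm_insertionSort r),
      l.pairwise_insertionSort r⟩

theorem exists_sorted_rightComb_general (r : α → α → Prop) [Std.Total r] [IsTrans α r]
    (t : FreeMagma α) :
    ∃ (a : α) (l : List α), List.Pairwise r (a :: l) ∧
      (↑(a :: l) : Multiset α) = leaves t ∧ acCon t (rightComb a l) := by
  obtain ⟨_ | ⟨a, l⟩, hleaves, hsorted⟩ := exists_coe_eq_and_pairwise r (leaves t)
  · exact absurd hleaves.symm (leaves_ne_zero t)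
  · exact ⟨a, l, hsorted, hleaves,
      acCon.of_leaves_eq (hleaves.symm.trans (leaves_rightComb a l).symm)⟩

theorem exists_sorted_rightComb [LinearOrder α] (t : FreeMagma α) :
    ∃ (a : α) (l : List α), List.Pairwise (· ≤ ·) (a :: l) ∧
      (↑(a :: l) : Multiset α) = leaves t ∧ acCon t (rightComb a l) :=
  exists_sorted_rightComb_general (· ≤ ·) t
end

section
/- The relation assocL on FreeMagma α is confluent: if assocL* t u and assocL* t v then there exists w with assocL* u w and assocL* v w, where assocL* denotes the reflexive-transitive closure of assocL. -/
/-!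
A magma homomorphism from `FreeMagma α` to a semigroup is constant along `assocL`; in particular
so is the word of leaves of a tree, its image in `FreeSemigroup α`. Conversely, every tree rewrites
to the left comb on its word of leaves, so two trees with the same word have a common reduct.
-/

variable {α : Type*}

/-- One step of left-reassociation in the free magma, closed under contexts. -/
inductive assocL : FreeMagma α → FreeMagma α → Prop
  | rot (t u v : FreeMagma α) : assocL (t * (u * v)) ((t * u) * v)
  | mulLeft {t t' : FreeMagma α} (u : FreeMagma α) : assocL t t' → assocL (t * u) (t' * u)
  | mulRight {t t' : FreeMagma α} (u : FreeMagma α) : assocL t t' → assocL (u * t) (u * t')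

open Relation (ReflTransGen)

namespace assocL

theorem map_eq {S : Type*} [Semigroup S] (f : FreeMagma α →ₙ* S) {t u : FreeMagma α}
    (h : assocL t u) : f t = f u := by
  induction h with
  | rot t u v => simp only [map_mul, mul_assoc]
  | mulLeft u _ ih => rw [map_mul, map_mul, ih]
  | mulRight u _ ih => rw [map_mul, map_mul, ih]

theorem map_eq_of_reflTransGen {S : Type*} [Semigroup S] (f : FreeMagma α →ₙ* S)
    {t u : FreeMagma α} (h : ReflTransGen assocL t u) : f t = f u := by
  induction h with
  | refl => rfl
  | tail _ hstep ih => exact ih.trans (hstep.map_eq f)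

theorem reflTransGen_mul {t t' u u' : FreeMagma α} (ht : ReflTransGen assocL t t')
    (hu : ReflTransGen assocL u u') : ReflTransGen assocL (t * u) (t' * u') :=
  (ht.lift (· * u) fun _ _ ↦ mulLeft u).trans (hu.lift (t' * ·) fun _ _ ↦ mulRight t')

theorem reflTransGen_mul_foldl_mul (s t : FreeMagma α) (l : List (FreeMagma α)) :
    ReflTransGen assocL (s * l.foldl (· * ·) t) (l.foldl (· * ·) (s * t)) := by
  induction l using List.reverseRecOn with
  | nil => exact .refl
  | append_singleton l u ih =>
    simp only [List.foldl_append, List.foldl_cons, List.foldl_nil]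
    exact .head (rot s _ u) (reflTransGen_mul ih .refl)

end assocL

/-- The left comb `((a₀ * a₁) * a₂) * ⋯` on a nonempty word `a₀ a₁ a₂ ⋯`: the `assocL`-normal form
of every tree whose leaves, read from left to right, spell that word. -/
def leftComb (w : FreeSemigroup α) : FreeMagma α :=
  (w.tail.map .of).foldl (· * ·) (.of w.head)

theorem leftComb_mul (v w : FreeSemigroup α) :
    leftComb (v * w) = (w.tail.map .of).foldl (· * ·) (leftComb v * .of w.head) := by
  simp only [leftComb, FreeSemigroup.head_mul, FreeSemigroup.tail_mul, List.map_append,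
    List.map_cons, List.foldl_append, List.foldl_cons]

namespace assocL

theorem reflTransGen_leftComb_mul (v w : FreeSemigroup α) :
    ReflTransGen assocL (leftComb v * leftComb w) (leftComb (v * w)) := by
  rw [leftComb_mul]
  exact reflTransGen_mul_foldl_mul _ _ _

theorem reflTransGen_leftComb_toFreeSemigroup (t : FreeMagma α) :
    ReflTransGen assocL t (leftComb (FreeMagma.toFreeSemigroup t)) := by
  induction t with
  | ih1 a => exact .refl
  | ih2 t u iht ihu =>
    rw [map_mul]
    exact (reflTransGen_mul iht ihu).trans (reflTransGen_leftComb_mul _ _)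

end assocL

theorem assocL_confluent_general {u v : FreeMagma α}
    (h : FreeMagma.toFreeSemigroup u = FreeMagma.toFreeSemigroup v) :
    ∃ w, ReflTransGen assocL u w ∧ ReflTransGen assocL v w :=
  ⟨leftComb (FreeMagma.toFreeSemigroup u),
    assocL.reflTransGen_leftComb_toFreeSemigroup u,
    h ▸ assocL.reflTransGen_leftComb_toFreeSemigroup v⟩

theorem assocL_confluent (t u v : FreeMagma α)
    (htu : Relation.ReflTransGen assocL t u) (htv : Relation.ReflTransGen assocL t v) :
    ∃ w, Relation.ReflTransGen assocL u w ∧ Relation.ReflTransGen assocL v w :=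
  assocL_confluent_general <|
    (assocL.map_eq_of_reflTransGen _ htu).symm.trans (assocL.map_eq_of_reflTransGen _ htv)
end
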